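/- arXiv:2510.22122 — 3 statements merged into one kernel-verified Lean document; each statement's English description precedes it below -/
import Mathlib

section
/- Let φ : ℝ × ℝ³ → ℝ be smooth. Define F : (0,∞) × (ℝ³ ∖ {0}) → ℝ by F(t,x) := t · φ(t, t·x/|x|). Then for every t > 0 and every ω ∈ ℝ³ with |ω| = 1: (a) t·(Sφ)(t, tω) = t·∂_t F(t,ω) − F(t,ω); (b) t·(Ω_{ij}φ)(t, tω) = x_i ∂_{x_j} F(t,x)|_{x=ω} − x_j ∂_{x_i} F(t,x)|_{x=ω} for all i, j ∈ {1,2,3}; (c) t·(Ω_{0i}φ)(t, tω) = t ω_i ∂_t F(t,ω) + ∂_{x_i} F(t,x)|_{x=ω} − ω_i F(t,ω) for all i ∈ {1,2,3}. -/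
/-!
Write `L = dφ` at `(t, tω)`. By the chain rule (`fderiv_coneF`), at `|ω| = 1`,
`∂_t F = φ + t (∂_t φ + L(0, ω))` and `∂_{x_i} F = t² (∂_{x_i} φ - ω_i L(0, ω))`, where the
radial derivative is `L(0, ω) = Σ ω_i ∂_{x_i} φ` (`sum_mul_dx`). The three identities are then
algebra: the radial terms cancel in the rotations by antisymmetry, and in the boosts between
`t ω_i ∂_t F` and `∂_{x_i} F`.
-/

noncomputable section

/-- Euclidean `ℝ³`. -/
abbrev E3 : Type := EuclideanSpace ℝ (Fin 3)

/-- Spacetime `ℝ × ℝ³`. -/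
abbrev Spc : Type := ℝ × E3

/-- The partial derivative `∂_t` of a function on `ℝ × ℝ³`. -/
def dt (φ : Spc → ℝ) (p : Spc) : ℝ := fderiv ℝ φ p (1, 0)

/-- The partial derivative `∂_{x_i}` of a function on `ℝ × ℝ³`. -/
def dx (i : Fin 3) (φ : Spc → ℝ) (p : Spc) : ℝ :=
  fderiv ℝ φ p (0, EuclideanSpace.single i 1)

/-- The scaling vector field `S = t ∂_t + Σᵢ xᵢ ∂_{x_i}`. -/
def Svf (φ : Spc → ℝ) (p : Spc) : ℝ := p.1 * dt φ p + ∑ i : Fin 3, p.2 i * dx i φ p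

/-- The Lorentz boost `Ω_{0i} = x_i ∂_t + t ∂_{x_i}`. -/
def Omega0 (i : Fin 3) (φ : Spc → ℝ) (p : Spc) : ℝ := p.2 i * dt φ p + p.1 * dx i φ p

/-- The rotation `Ω_{ij} = x_i ∂_{x_j} - x_j ∂_{x_i}`. -/
def OmegaR (i j : Fin 3) (φ : Spc → ℝ) (p : Spc) : ℝ :=
  p.2 i * dx j φ p - p.2 j * dx i φ p

/-- The restriction of `r·φ` to the forward light cone `{t = |x|}`, extended to `x ≠ 0`
as a function homogeneous of degree `0` in `x`: `F(t,x) = t φ(t, t x/|x|)`. -/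
def coneF (φ : Spc → ℝ) (p : Spc) : ℝ := p.1 * φ (p.1, (p.1 / ‖p.2‖) • p.2)

/-- Chain rule for `coneF`. At a unit vector `ω`, the map `x ↦ x/|x|` has differential
`v ↦ v - ⟨ω, v⟩ ω`, the projection onto the tangent plane of the sphere. -/
lemma fderiv_coneF (φ : Spc → ℝ) (hφ : Differentiable ℝ φ) (t : ℝ) (ω : E3) (hω : ‖ω‖ = 1)
    (s : ℝ) (v : E3) :
    fderiv ℝ (coneF φ) (t, ω) (s, v) = s * φ (t, t • ω) +
      t * fderiv ℝ φ (t, t • ω) (s, s • ω + t • (v - inner ℝ ω v • ω)) := by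
  have h1 : HasFDerivAt (fun p : Spc => p.1) (ContinuousLinearMap.fst ℝ ℝ E3) (t, ω) :=
    hasFDerivAt_fst
  have h2 : HasFDerivAt (fun p : Spc => p.2) (ContinuousLinearMap.snd ℝ ℝ E3) (t, ω) :=
    hasFDerivAt_snd
  -- `‖x‖` is differentiated as the square root of the polynomial `‖x‖ ^ 2`.
  have hn := h2.norm_sq.sqrt (by simp [hω])
  simp only [Real.sqrt_sq (norm_nonneg _)] at hn
  have hi : HasFDerivAt (fun p : Spc => p.1 * ‖p.2‖⁻¹) _ (t, ω) :=
    h1.mul ((hasDerivAt_inv (x := ‖ω‖) (by simp [hω])).comp_hasFDerivAt (t, ω) hn)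
  have hg := h1.prodMk (hi.smul h2)
  have hp : HasFDerivAt φ (fderiv ℝ φ (t, t • ω)) (t, (t * ‖ω‖⁻¹) • ω) := by
    simpa [hω] using (hφ (t, t • ω)).hasFDerivAt
  have hF : HasFDerivAt (coneF φ) _ (t, ω) := h1.mul (hp.comp (t, ω) hg)
  rw [hF.fderiv]
  have hv : s • ω + t • (v - inner ℝ ω v • ω) = t • v + (-(t * inner ℝ ω v) + s) • ω := by
    module
  simp [hω, hv]
  ring

/-- The radial derivative in Cartesian coordinates. -/
lemma sum_mul_dx (φ : Spc → ℝ) (p : Spc) (ω : E3) :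
    ∑ i : Fin 3, ω i * dx i φ p = fderiv ℝ φ p (0, ω) := by
  have h : ((0 : ℝ), ω) = ∑ i : Fin 3, ω i • ((0 : ℝ), (EuclideanSpace.single i 1 : E3)) := by
    ext j
    · simp [Prod.fst_sum]
    · fin_cases j <;> simp [Fin.sum_univ_three]
  conv_rhs => rw [h]
  simp only [map_sum, map_smul, smul_eq_mul, dx]

/-- Values of `r·(Zφ)` on the cone `{t = |x|}` in terms of the cone restriction `F` of
`r·φ`, for each Minkowski commuting vector field `Z ∈ {S, Ω_{ij}, Ω_{0i}}`. -/
theorem cone_data_vector_fields (φ : Spc → ℝ) (hφ : ContDiff ℝ (⊤ : ℕ∞) φ)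
    (t : ℝ) (ht : 0 < t) (ω : E3) (hω : ‖ω‖ = 1) :
    (t * Svf φ (t, t • ω) = t * dt (coneF φ) (t, ω) - coneF φ (t, ω)) ∧
    (∀ i j : Fin 3, t * OmegaR i j φ (t, t • ω) =
      ω i * dx j (coneF φ) (t, ω) - ω j * dx i (coneF φ) (t, ω)) ∧
    (∀ i : Fin 3, t * Omega0 i φ (t, t • ω) =
      t * ω i * dt (coneF φ) (t, ω) + dx i (coneF φ) (t, ω) - ω i * coneF φ (t, ω)) := by
  have hd : Differentiable ℝ φ := hφ.differentiable (by simp)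
  have hc : coneF φ (t, ω) = t * φ (t, t • ω) := by simp [coneF, hω]
  have hdt : dt (coneF φ) (t, ω) = φ (t, t • ω) +
      t * (dt φ (t, t • ω) + fderiv ℝ φ (t, t • ω) (0, ω)) := by
    have h : ((1 : ℝ), ω) = (1, 0) + (0, ω) := by simp
    simp only [dt, fderiv_coneF φ hd t ω hω, ← map_add, ← h]
    simp
  have hdx : ∀ i, dx i (coneF φ) (t, ω) =
      t ^ 2 * (dx i φ (t, t • ω) - ω i * fderiv ℝ φ (t, t • ω) (0, ω)) := by
    intro i
    have h : ((0 : ℝ), t • ((EuclideanSpace.single i 1 : E3) - ω i • ω)) =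
        t • ((0, EuclideanSpace.single i 1) - ω i • (0, ω)) := by simp
    simp only [dx, fderiv_coneF φ hd t ω hω]
    simp only [EuclideanSpace.inner_single_right, zero_smul, zero_add, one_mul, conj_trivial]
    rw [h]
    simp only [map_smul, map_sub, smul_eq_mul]
    ring
  refine ⟨?_, fun i j => ?_, fun i => ?_⟩
  · have h : ∑ i : Fin 3, (t • ω) i * dx i φ (t, t • ω) =
        t * fderiv ℝ φ (t, t • ω) (0, ω) := by
      rw [← sum_mul_dx, Finset.mul_sum]
      exact Finset.sum_congr rfl fun i _ => by simp [mul_assoc]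
    simp only [Svf, h, hdt, hc]
    ring
  · simp only [OmegaR, hdx, PiLp.smul_apply, smul_eq_mul]
    ring
  · simp only [Omega0, hdx, hdt, hc, PiLp.smul_apply, smul_eq_mul]
    ring
end
end

section
/- Let φ : ℝ × ℝ³ → ℝ be smooth. Define F : (0,∞) × (ℝ³ ∖ {0}) → ℝ by F(t,x) := t · φ(t, t·x/|x|), and for a smooth function ψ of (t,y) ∈ ℝ × ℝ³ define L(ψ)(t,y) := ∂_t(|y|ψ(t,y)) + Σ_{i=1}^3 (y_i/|y|) ∂_{y_i}(|y|ψ(t,y)) for y ≠ 0 (that is, L(ψ) = (∂_t + ∂_r)(rψ)). Then for every t > 0 and every ω ∈ ℝ³ with |ω| = 1: (a) L(Sφ)(t, tω) = t·∂²_t F(t,ω); (b) L(Ω_{ij}φ)(t, tω) = ( x_i ∂_{x_j}(∂_t F) − x_j ∂_{x_i}(∂_t F) )(t,x)|_{x=ω} for all i, j ∈ {1,2,3}; (c) L(Ω_{0i}φ)(t, tω) = t ω_i ∂²_t F(t,ω) + ∂_{x_i}(∂_t F)(t,x)|_{x=ω} for all i ∈ {1,2,3}. -/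
/-!
On the cone, `∂_t + ∂_r` differentiates along the generator `s ↦ (s, sω)`, where `r = s`; hence
`L(ψ)(t, tω)` is the derivative at `s = t` of `s ψ(s, sω)` (`Lop_cone`). The first derivatives of
`F` are computed by the chain rule (`dt_coneF`, `dx_coneF`), and solving for the derivatives of
`φ` gives, at `(s, sω)`,

* `r Sφ = s ∂_t F - F`,
* `r Ω_{ij} φ = ω_i ∂_{x_j} F - ω_j ∂_{x_i} F`,
* `r Ω_{0i} φ = ω_i (s ∂_t F - F) + ∂_{x_i} F`.

Differentiating in `s` and commuting the mixed derivatives of `F` (`hasDerivAt_fderiv_symm`)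
yields the three identities, since `∂_s (s ∂_t F - F) = s ∂_t² F`.
-/

noncomputable section

/-- The operator `L(ψ) = (∂_t + ∂_r)(r ψ)`, i.e.
`L(ψ)(t,y) = ∂_t(|y|ψ) + Σᵢ (yᵢ/|y|) ∂_{y_i}(|y|ψ)`. -/
def Lop (ψ : Spc → ℝ) (p : Spc) : ℝ :=
  dt (fun q => ‖q.2‖ * ψ q) p + ∑ i : Fin 3, (p.2 i / ‖p.2‖) * dx i (fun q => ‖q.2‖ * ψ q) p

lemma clm_spc_apply (A : Spc →L[ℝ] ℝ) (a : ℝ) (v : E3) :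
    A (a, v) = a * A (1, 0) + ∑ i : Fin 3, v i * A (0, EuclideanSpace.single i 1) := by
  have h : ((a, v) : Spc) =
      a • ((1, 0) : Spc) + ∑ i : Fin 3, v i • ((0, EuclideanSpace.single i 1) : Spc) := by
    ext k
    · simp [Prod.fst_sum]
    · fin_cases k <;> simp [Fin.sum_univ_three]
  conv_lhs => rw [h]
  simp only [map_add, map_sum, map_smul, smul_eq_mul]

lemma hasDerivAt_ray (ω : E3) (t : ℝ) :
    HasDerivAt (fun s : ℝ => ((s, s • ω) : Spc)) (1, ω) t := by
  have := (hasDerivAt_id t).prodMk ((hasDerivAt_id t).smul_const ω)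
  simpa using this

/-- On the cone, `L(ψ)` is the derivative of `s ↦ s ψ(s, sω)`: the operator `∂_t + ∂_r`
differentiates along the generator `s ↦ (s, sω)`, on which `r = s`. -/
lemma Lop_cone {ψ : Spc → ℝ} {t d : ℝ} {ω : E3} (ht : 0 < t) (hω : ‖ω‖ = 1)
    (hψ : DifferentiableAt ℝ ψ (t, t • ω))
    (hd : HasDerivAt (fun s : ℝ => s * ψ (s, s • ω)) d t) :
    Lop ψ (t, t • ω) = d := by
  have hω0 : ω ≠ 0 := by
    rintro rfl
    simp at hω
  have hg : DifferentiableAt ℝ (fun q : Spc => ‖q.2‖ * ψ q) (t, t • ω) :=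
    (DifferentiableAt.norm ℝ (f := fun q : Spc => q.2) differentiableAt_snd
      (smul_ne_zero ht.ne' hω0)).mul hψ
  have h1 := hg.hasFDerivAt.comp_hasDerivAt t (hasDerivAt_ray ω t)
  have h2 : HasDerivAt ((fun q : Spc => ‖q.2‖ * ψ q) ∘ fun s : ℝ => ((s, s • ω) : Spc)) d t := by
    refine hd.congr_of_eventuallyEq ?_
    filter_upwards [lt_mem_nhds ht] with s hs
    simp [norm_smul, hω, abs_of_pos hs]
  rw [← h1.unique h2, clm_spc_apply]
  simp [Lop, dt, dx, norm_smul, hω, abs_of_pos ht, mul_div_cancel_left₀, ht.ne']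

lemma contDiffAt_coneF {φ : Spc → ℝ} (hφ : ContDiff ℝ (⊤ : ℕ∞) φ) (s : ℝ) {ω : E3}
    (hω : ω ≠ 0) : ContDiffAt ℝ (⊤ : ℕ∞) (coneF φ) (s, ω) := by
  have hn : ContDiffAt ℝ (⊤ : ℕ∞) (fun q : Spc => ‖q.2‖) (s, ω) := contDiffAt_snd.norm ℝ hω
  unfold coneF
  refine contDiffAt_fst.mul (hφ.contDiffAt.comp (s, ω) ?_)
  exact contDiffAt_fst.prodMk
    ((contDiffAt_fst.div hn (norm_ne_zero_iff.2 hω)).smul contDiffAt_snd)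

lemma dt_coneF {φ : Spc → ℝ} (hφ : ContDiff ℝ (⊤ : ℕ∞) φ) (s : ℝ) {ω : E3} (hω : ‖ω‖ = 1) :
    dt (coneF φ) (s, ω) = φ (s, s • ω)
      + s * (dt φ (s, s • ω) + ∑ k : Fin 3, ω k * dx k φ (s, s • ω)) := by
  have hω0 : ω ≠ 0 := by
    rintro rfl
    simp at hω
  have hF := ((contDiffAt_coneF hφ s hω0).differentiableAt (by simp)).hasFDerivAt
  have h1 := hF.comp_hasDerivAt s ((hasDerivAt_id s).prodMk (hasDerivAt_const s ω))
  have hp := ((hφ.differentiable (by simp)) (s, s • ω)).hasFDerivAt.comp_hasDerivAt s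
    (hasDerivAt_ray ω s)
  have h2 := (hasDerivAt_id s).mul hp
  have h3 := h1.unique (h2.congr_of_eventuallyEq (Filter.Eventually.of_forall fun u => by
    simp [coneF, hω]))
  rw [clm_spc_apply _ 1 ω] at h3
  simpa [dt, dx] using h3

/-- The normalisation `x ↦ x/|x|` has derivative `ξ ↦ ξ - ⟨ω, ξ⟩ ω` at a unit vector `ω`, so
`∂_{x_i} F` only sees the part of the gradient of `φ` tangent to the sphere. -/
lemma dx_coneF {φ : Spc → ℝ} (hφ : ContDiff ℝ (⊤ : ℕ∞) φ) (s : ℝ) {ω : E3} (hω : ‖ω‖ = 1)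
    (i : Fin 3) :
    dx i (coneF φ) (s, ω) = s ^ 2 *
      (dx i φ (s, s • ω) - ω i * ∑ k : Fin 3, ω k * dx k φ (s, s • ω)) := by
  have hω0 : ω ≠ 0 := by
    rintro rfl
    simp at hω
  set e : E3 := EuclideanSpace.single i 1 with he
  have hF := ((contDiffAt_coneF hφ s hω0).differentiableAt (by simp)).hasFDerivAt
  -- All derivatives are taken along the line `u ↦ ω + u e_i` at `u = 0`.
  have hl : HasDerivAt (fun u : ℝ => ω + u • e) e 0 := by
    simpa using ((hasDerivAt_id (0 : ℝ)).smul_const e).const_add ω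
  have h1 := HasFDerivAt.comp_hasDerivAt_of_eq (0 : ℝ) hF
    ((hasDerivAt_const (0 : ℝ) s).prodMk hl) (by simp)
  have hsq : HasDerivAt (fun u : ℝ => ‖ω + u • e‖ ^ 2) (2 * ω i) 0 := by
    have := hl.norm_sq
    simpa [he, EuclideanSpace.inner_single_right] using this
  have hn : HasDerivAt (fun u : ℝ => ‖ω + u • e‖) (ω i) 0 := by
    have h := hsq.sqrt (by simp [hω])
    simpa [Real.sqrt_sq, hω] using h
  have hq : HasDerivAt (fun u : ℝ => (s / ‖ω + u • e‖) • (ω + u • e))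
      (s • e - (s * ω i) • ω) 0 := by
    have h := ((hasDerivAt_const (0 : ℝ) s).div hn (by simp [hω])).smul hl
    refine HasDerivAt.congr_deriv h ?_
    simp [hω, sub_eq_add_neg]
  have hp := HasFDerivAt.comp_hasDerivAt_of_eq (0 : ℝ)
    ((hφ.differentiable (by simp)) (s, s • ω)).hasFDerivAt
    ((hasDerivAt_const (0 : ℝ) s).prodMk hq) (by simp [hω])
  have h3 := h1.unique (hp.const_mul s)
  rw [clm_spc_apply _ 0 (s • e - _)] at h3
  unfold dx
  rw [h3]
  simp only [he]
  fin_cases i <;> simp [Fin.sum_univ_three] <;> ring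

lemma differentiable_dir {φ : Spc → ℝ} (hφ : ContDiff ℝ (⊤ : ℕ∞) φ) (v : Spc) :
    Differentiable ℝ (fun p => fderiv ℝ φ p v) :=
  ((hφ.fderiv_right (m := 1) (by norm_cast)).clm_apply contDiff_const).differentiable (by simp)

/-- Symmetry of second derivatives, with one of the two derivatives taken along a curve `c` of
velocity `w`. -/
lemma hasDerivAt_fderiv_symm {E : Type*} [NormedAddCommGroup E] [NormedSpace ℝ E] {f : E → ℝ}
    {c : ℝ → E} {t : ℝ} {w : E} (hf : ContDiffAt ℝ 2 f (c t)) (hc : HasDerivAt c w t) (v : E) :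
    HasDerivAt (fun s : ℝ => fderiv ℝ f (c s) v)
      (fderiv ℝ (fun p => fderiv ℝ f p w) (c t) v) t := by
  have hD : DifferentiableAt ℝ (fderiv ℝ f) (c t) :=
    (hf.fderiv_right (m := 1) (by norm_num)).differentiableAt (by simp)
  have hsymm := hf.isSymmSndFDerivAt (by simp)
  have h1 := (hD.hasFDerivAt.comp_hasDerivAt t hc).clm_apply (hasDerivAt_const t v)
  have h2 : fderiv ℝ (fun p => fderiv ℝ f p w) (c t) v = fderiv ℝ (fderiv ℝ f) (c t) v w := by
    rw [(hD.hasFDerivAt.clm_apply (hasFDerivAt_const w (c t))).fderiv]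
    simp
  rw [h2, hsymm.eq v w]
  simpa using h1

lemma hasDerivAt_dir_coneF {φ : Spc → ℝ} (hφ : ContDiff ℝ (⊤ : ℕ∞) φ) (t : ℝ) {ω : E3}
    (hω : ω ≠ 0) (v : Spc) :
    HasDerivAt (fun s : ℝ => fderiv ℝ (coneF φ) (s, ω) v)
      (fderiv ℝ (dt (coneF φ)) (t, ω) v) t :=
  hasDerivAt_fderiv_symm (c := fun s : ℝ => ((s, ω) : Spc))
    ((contDiffAt_coneF hφ t hω).of_le (by norm_cast))
    ((hasDerivAt_id t).prodMk (hasDerivAt_const t ω)) v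

/-- Characteristic data of `Zφ` on the cone `{t = |x|}`: for each Minkowski commuting
vector field `Z ∈ {S, Ω_{ij}, Ω_{0i}}`, the value of `(∂_t + ∂_r)(r·Zφ)` on the cone is
expressed in terms of derivatives of the characteristic datum `∂_t F` of `φ`. -/
theorem cone_characteristic_data_vector_fields (φ : Spc → ℝ) (hφ : ContDiff ℝ (⊤ : ℕ∞) φ)
    (t : ℝ) (ht : 0 < t) (ω : E3) (hω : ‖ω‖ = 1) :
    (Lop (Svf φ) (t, t • ω) = t * dt (dt (coneF φ)) (t, ω)) ∧
    (∀ i j : Fin 3, Lop (OmegaR i j φ) (t, t • ω) =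
      ω i * dx j (dt (coneF φ)) (t, ω) - ω j * dx i (dt (coneF φ)) (t, ω)) ∧
    (∀ i : Fin 3, Lop (Omega0 i φ) (t, t • ω) =
      t * ω i * dt (dt (coneF φ)) (t, ω) + dx i (dt (coneF φ)) (t, ω)) := by
  have hω0 : ω ≠ 0 := by
    rintro rfl
    simp at hω
  have hdt : Differentiable ℝ (dt φ) := differentiable_dir hφ _
  have hdx : ∀ i, Differentiable ℝ (dx i φ) := fun i => differentiable_dir hφ _
  have hF1 : HasDerivAt (fun s : ℝ => coneF φ (s, ω)) (dt (coneF φ) (t, ω)) t :=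
    HasFDerivAt.comp_hasDerivAt (f := fun s : ℝ => ((s, ω) : Spc)) t
      ((contDiffAt_coneF hφ t hω0).differentiableAt (by simp)).hasFDerivAt
      ((hasDerivAt_id t).prodMk (hasDerivAt_const t ω))
  have hFt : HasDerivAt (fun s : ℝ => dt (coneF φ) (s, ω)) (dt (dt (coneF φ)) (t, ω)) t :=
    hasDerivAt_dir_coneF hφ t hω0 _
  have hFx : ∀ i, HasDerivAt (fun s : ℝ => dx i (coneF φ) (s, ω))
      (dx i (dt (coneF φ)) (t, ω)) t :=
    fun i => hasDerivAt_dir_coneF hφ t hω0 _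
  have hcone : ∀ s : ℝ, coneF φ (s, ω) = s * φ (s, s • ω) := fun s => by simp [coneF, hω]
  refine ⟨?_, fun i j => ?_, fun i => ?_⟩
  · refine Lop_cone ht hω (by unfold Svf; fun_prop) ?_
    -- On the cone, `r Sφ = t ∂_t F - F`.
    have h := ((hasDerivAt_id t).mul hFt).sub hF1
    refine (h.congr_of_eventuallyEq (Filter.Eventually.of_forall fun s => ?_)).congr_deriv ?_
    · simp [Svf, dt_coneF hφ s hω, hcone, Fin.sum_univ_three]
      ring
    · simp
  · refine Lop_cone ht hω (by unfold OmegaR; fun_prop) ?_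
    -- On the cone, `r Ω_{ij} φ = Ω_{ij} F`.
    have h := ((hFx j).const_mul (ω i)).sub ((hFx i).const_mul (ω j))
    refine h.congr_of_eventuallyEq (Filter.Eventually.of_forall fun s => ?_)
    simp [OmegaR, dx_coneF hφ s hω]
    ring
  · refine Lop_cone ht hω (by unfold Omega0; fun_prop) ?_
    -- On the cone, `r Ω_{0i} φ = t ω_i ∂_t F - ω_i F + ∂_{x_i} F`.
    have h := ((((hasDerivAt_id t).mul hFt).sub hF1).const_mul (ω i)).add (hFx i)
    refine (h.congr_of_eventuallyEq (Filter.Eventually.of_forall fun s => ?_)).congr_deriv ?_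
    · simp [Omega0, dt_coneF hφ s hω, dx_coneF hφ s hω, hcone]
      ring
    · simp
      ring
end
end

section
/- Let T > 0 and X ∈ ℝ³, and define D_{T,X} := { (t,x) ∈ ℝ × ℝ³ : T − |X| ≤ t + |x| ≤ T + |X| and t − |x| ≤ T − |X| }. Suppose φ₁, φ₂, F₁, F₂ : ℝ × ℝ³ → ℝ are smooth, □φ_k = F_k for k = 1,2, φ_k(0,·) ≡ 0 and ∂_t φ_k(0,·) ≡ 0 for k = 1,2, F_k(t,x) = 0 whenever t < 0, and F₁(t,x) = F₂(t,x) for all (t,x) ∈ D_{T,X}. Then φ₁(T,X) = φ₂(T,X). -/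
/-!
By linearity it suffices that the difference `φ = φ₁ - φ₂`, which has zero Cauchy data, vanishes at
`(T, X)`. Its forcing vanishes on `D_{T,X}`, hence on the backward light cone
`{(T - r, X + rω) : 0 ≤ r ≤ T, |ω| = 1}`, which lies in `D_{T,X}` by the triangle inequality.

The remaining claim, `eq_zero_of_cone`, is the method of spherical means along the cone. Put
`g(r, ω) = r (∂ₜφ + ∂ᵣφ) + φ` at `(T - r, X + rω)`. Then `∂ᵣ g = r □φ - r⁻¹ Δ_S φ`, where `Δ_S` is the
Laplacian of the unit sphere. The first term vanishes on the cone. The second has zero mean over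
the sphere, because `Δ_S` is a sum of squares of rotation fields and the surface measure is
rotation invariant (`integral_rot_eq_zero`, `integral_angular_eq_zero`). Hence `∫ g(r, ω) dω` is
constant on `[0, T]`. At `r = T` it is zero by the Cauchy data, and at `r = 0` it is
`φ(T, X)` times the area of the sphere.
-/

noncomputable section

/-- The Minkowski d'Alembertian `□φ = -∂²_t φ + Σᵢ ∂²_{x_i} φ`. -/
def dalembert (φ : Spc → ℝ) (p : Spc) : ℝ :=
  - dt (dt φ) p + ∑ i : Fin 3, dx i (dx i φ) p

section Proof

open MeasureTheory Metric Set

/-! ### Integration over the unit sphere -/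

/-- The surface measure on the unit sphere of `ℝ³`, up to a positive factor, as a measure on `ℝ³`:
the image of Lebesgue measure on the unit ball under `y ↦ y / ‖y‖`. Its invariance under linear
isometries is then inherited from Lebesgue measure. -/
def sphereMeasure : Measure E3 :=
  (volume.restrict (ball (0 : E3) 1)).map (fun y => ‖y‖⁻¹ • y)

lemma measurable_normalize : Measurable (fun y : E3 => ‖y‖⁻¹ • y) :=
  measurable_norm.inv.smul measurable_id

instance : IsFiniteMeasure (volume.restrict (ball (0 : E3) 1)) :=
  ⟨by simp⟩

instance : IsFiniteMeasure sphereMeasure := by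
  unfold sphereMeasure
  infer_instance

lemma sphereMeasure_univ_pos : 0 < sphereMeasure.real univ := by
  have h : sphereMeasure univ = volume (ball (0 : E3) 1) := by
    rw [sphereMeasure, Measure.map_apply measurable_normalize MeasurableSet.univ]
    simp
  rw [Measure.real, h]
  exact ENNReal.toReal_pos (measure_ball_pos _ _ one_pos).ne' measure_ball_lt_top.ne

lemma ae_norm_eq_one : ∀ᵐ ω ∂sphereMeasure, ‖ω‖ = 1 := by
  rw [sphereMeasure, ae_map_iff measurable_normalize.aemeasurable
    (measurableSet_eq_fun measurable_norm measurable_const)]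
  have h0 : ∀ᵐ y ∂(volume : Measure E3), y ≠ 0 := by
    simp [ae_iff]
  filter_upwards [ae_restrict_of_ae h0] with y hy
  rw [norm_smul, norm_inv, norm_norm, inv_mul_cancel₀ (norm_ne_zero_iff.mpr hy)]

lemma integral_comp_isometry (A : E3 ≃ₗᵢ[ℝ] E3) (f : E3 → ℝ) (hf : Continuous f) :
    ∫ ω, f (A ω) ∂sphereMeasure = ∫ ω, f ω ∂sphereMeasure := by
  rw [sphereMeasure, integral_map measurable_normalize.aemeasurable
      (f := fun ω => f (A ω)) (hf.comp A.continuous).aestronglyMeasurable,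
    integral_map measurable_normalize.aemeasurable hf.aestronglyMeasurable]
  have hpre : A ⁻¹' ball (0 : E3) 1 = ball 0 1 := by
    ext y; simp
  have := A.measurePreserving.setIntegral_preimage_emb
    A.toHomeomorph.measurableEmbedding (fun y => f (‖y‖⁻¹ • y)) (ball 0 1)
  rw [hpre] at this
  simpa using this

lemma integrable_sphere {f : E3 → ℝ} (hf : Continuous f) : Integrable f sphereMeasure := by
  obtain ⟨C, hC⟩ := (isCompact_sphere (0 : E3) 1).exists_bound_of_continuousOn hf.continuousOn
  refine Integrable.of_bound hf.aestronglyMeasurable C ?_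
  filter_upwards [ae_norm_eq_one] with ω hω
  exact hC ω (by simpa using hω)

/-- Differentiation under the integral over the sphere. -/
lemma hasDerivAt_integral_sphere (h h' : ℝ → E3 → ℝ) (hc : Continuous (Function.uncurry h))
    (hc' : Continuous (Function.uncurry h'))
    (hd : ∀ s ω, HasDerivAt (fun s => h s ω) (h' s ω) s) (s₀ : ℝ) :
    HasDerivAt (fun s => ∫ ω, h s ω ∂sphereMeasure) (∫ ω, h' s₀ ω ∂sphereMeasure) s₀ := by
  obtain ⟨C, hC⟩ := ((isCompact_closedBall s₀ 1).prod
    (isCompact_sphere (0 : E3) 1)).exists_bound_of_continuousOn hc'.continuousOn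
  refine (hasDerivAt_integral_of_dominated_loc_of_deriv_le (bound := fun _ => C)
    (closedBall_mem_nhds s₀ one_pos) (Filter.Eventually.of_forall fun s => ?_) ?_ ?_ ?_
    (integrable_const C) (Filter.Eventually.of_forall fun ω s _ => hd s ω)).2
  · exact (hc.comp (Continuous.prodMk_right s)).aestronglyMeasurable
  · exact integrable_sphere (hc.comp (Continuous.prodMk_right s₀))
  · exact (hc'.comp (Continuous.prodMk_right s₀)).aestronglyMeasurable
  · filter_upwards [ae_norm_eq_one] with ω hω s hs
    exact hC (s, ω) ⟨hs, by simpa using hω⟩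

/-! ### Rotations and rotation fields -/

/-- The `i`-th vector of the standard basis of `ℝ³`. -/
abbrev stdVec (i : Fin 3) : E3 := EuclideanSpace.single i 1

/-- Rotation by the angle `s` in the `(i, j)` coordinate plane (meaningful for `i ≠ j`). -/
def rotMap (i j : Fin 3) (s : ℝ) : E3 →ₗ[ℝ] E3 where
  toFun x := x + (Real.cos s - 1) • (x i • stdVec i + x j • stdVec j)
    + Real.sin s • (x i • stdVec j - x j • stdVec i)
  map_add' x y := by
    simp only [PiLp.add_apply]; module
  map_smul' c x := by
    simp only [PiLp.smul_apply, smul_eq_mul, RingHom.id_apply]; module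

lemma rotMap_apply (i j : Fin 3) (s : ℝ) (x : E3) :
    rotMap i j s x = x + (Real.cos s - 1) • (x i • stdVec i + x j • stdVec j)
      + Real.sin s • (x i • stdVec j - x j • stdVec i) := rfl

lemma norm_rotMap {i j : Fin 3} (hij : i ≠ j) (s : ℝ) (x : E3) : ‖rotMap i j s x‖ = ‖x‖ := by
  rw [← sq_eq_sq₀ (norm_nonneg _) (norm_nonneg _), EuclideanSpace.norm_sq_eq,
    EuclideanSpace.norm_sq_eq, rotMap_apply]
  have hsc := Real.sin_sq_add_cos_sq s
  fin_cases i <;> fin_cases j <;> simp at hij ⊢ <;>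
    simp [Fin.sum_univ_three] <;>
    first
    | linear_combination (x 0 ^ 2 + x 1 ^ 2) * hsc
    | linear_combination (x 0 ^ 2 + x 2 ^ 2) * hsc
    | linear_combination (x 1 ^ 2 + x 2 ^ 2) * hsc

/-- The rotation fields are divergence free on the sphere: the derivative of a `C¹` function along
`ω ↦ ωᵢ eⱼ - ωⱼ eᵢ` has zero mean, as it generates the rotations of the `(i, j)` plane. -/
lemma integral_rot_eq_zero (i j : Fin 3) (f : E3 → ℝ) (hf : ContDiff ℝ 1 f) :
    ∫ ω, fderiv ℝ f ω (ω i • stdVec j - ω j • stdVec i) ∂sphereMeasure = 0 := by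
  rcases eq_or_ne i j with rfl | hij
  · simp
  have hcf := hf.continuous
  have hcf' : Continuous (fderiv ℝ f) := hf.continuous_fderiv (by norm_num)
  have key := hasDerivAt_integral_sphere (fun s ω => f (rotMap i j s ω))
    (fun s ω => fderiv ℝ f (rotMap i j s ω)
      ((-Real.sin s) • (ω i • stdVec i + ω j • stdVec j)
        + Real.cos s • (ω i • stdVec j - ω j • stdVec i)))
    (by simp only [rotMap_apply, Function.uncurry_def]; fun_prop)
    (by simp only [rotMap_apply, Function.uncurry_def]; fun_prop)
    (by
      intro s ω
      have h1 : HasDerivAt (fun s => rotMap i j s ω)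
          ((-Real.sin s) • (ω i • stdVec i + ω j • stdVec j)
            + Real.cos s • (ω i • stdVec j - ω j • stdVec i)) s := by
        simp only [rotMap_apply]
        exact ((((Real.hasDerivAt_cos s).sub_const 1).smul_const _).const_add ω).add
          ((Real.hasDerivAt_sin s).smul_const _)
      exact ((hf.differentiable (by norm_num)).differentiableAt.hasFDerivAt).comp_hasDerivAt s h1) 0
  have hconst : (fun s => ∫ ω, f (rotMap i j s ω) ∂sphereMeasure)
      = fun _ => ∫ ω, f ω ∂sphereMeasure := by
    funext s
    exact integral_comp_isometry
      ((⟨rotMap i j s, norm_rotMap hij s⟩ : E3 →ₗᵢ[ℝ] E3).toLinearIsometryEquiv rfl) f hcf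
  rw [hconst] at key
  have := key.unique (hasDerivAt_const _ _)
  simpa [rotMap_apply] using this

/-! ### The wave operator through the second derivative -/

lemma dir_dir {φ : Spc → ℝ} (hφ : ContDiff ℝ 2 φ) (v : Spc) (p : Spc) :
    fderiv ℝ (fun q => fderiv ℝ φ q v) p v = fderiv ℝ (fderiv ℝ φ) p v v := by
  have h : DifferentiableAt ℝ (fderiv ℝ φ) p :=
    ((hφ.fderiv_right (m := 1) (by norm_num)).differentiable (by norm_num)).differentiableAt
  rw [fderiv_clm_apply h (differentiableAt_const v)]
  simp

lemma dalembert_eq {φ : Spc → ℝ} (hφ : ContDiff ℝ 2 φ) (p : Spc) :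
    dalembert φ p = - fderiv ℝ (fderiv ℝ φ) p (1, 0) (1, 0)
      + ∑ i : Fin 3, fderiv ℝ (fderiv ℝ φ) p (0, stdVec i) (0, stdVec i) := by
  have h1 : dt (dt φ) p = _ := dir_dir hφ (1, 0) p
  have h2 : ∀ i, dx i (dx i φ) p = _ := fun i => dir_dir hφ (0, stdVec i) p
  simp only [dalembert, h1, h2]

lemma dalembert_sub {φ ψ : Spc → ℝ} (hφ : ContDiff ℝ 2 φ) (hψ : ContDiff ℝ 2 ψ) (p : Spc) :
    dalembert (fun q => φ q - ψ q) p = dalembert φ p - dalembert ψ p := by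
  have h : fderiv ℝ (fun q => φ q - ψ q) = fun q => fderiv ℝ φ q - fderiv ℝ ψ q := by
    funext q
    exact fderiv_fun_sub (hφ.differentiable (by norm_num)).differentiableAt
      (hψ.differentiable (by norm_num)).differentiableAt
  have h2 : fderiv ℝ (fderiv ℝ (fun q => φ q - ψ q)) p
      = fderiv ℝ (fderiv ℝ φ) p - fderiv ℝ (fderiv ℝ ψ) p := by
    rw [h]
    exact fderiv_fun_sub
      ((hφ.fderiv_right (m := 1) (by norm_num)).differentiable (by norm_num)).differentiableAt
      ((hψ.fderiv_right (m := 1) (by norm_num)).differentiable (by norm_num)).differentiableAt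
  rw [dalembert_eq (hφ.sub hψ), dalembert_eq hφ, dalembert_eq hψ, h2]
  simp only [_root_.sub_apply, Finset.sum_sub_distrib]
  ring

lemma sum_smul_stdVec (ω : E3) : ω = ∑ i : Fin 3, ω i • stdVec i := by
  ext k
  fin_cases k <;> simp [Fin.sum_univ_three]

/-! ### The angular part of the Laplacian -/

lemma contDiff_coord_mul {φ : Spc → ℝ} (hφ : ContDiff ℝ 2 φ) (t r : ℝ) (X : E3) (i j : Fin 3) :
    ContDiff ℝ 1 (fun ω : E3 => ω i * fderiv ℝ φ (t, X + r • ω) (0, stdVec j)) := by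
  have hD : ContDiff ℝ 1 (fderiv ℝ φ) := hφ.fderiv_right (by norm_num)
  have hcoord : ContDiff ℝ 1 (fun ω : E3 => ω i) := by fun_prop
  have hp : ContDiff ℝ 1 (fun ω : E3 => ((t, X + r • ω) : Spc)) := by fun_prop
  exact hcoord.mul ((hD.comp hp).clm_apply contDiff_const)

lemma fderiv_coord_mul {φ : Spc → ℝ} (hφ : ContDiff ℝ 2 φ) (t r : ℝ) (X : E3) (i j : Fin 3)
    (ω v : E3) :
    fderiv ℝ (fun ω : E3 => ω i * fderiv ℝ φ (t, X + r • ω) (0, stdVec j)) ω v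
      = ω i * (r * fderiv ℝ (fderiv ℝ φ) (t, X + r • ω) (0, v) (0, stdVec j))
        + v i * fderiv ℝ φ (t, X + r • ω) (0, stdVec j) := by
  have hD : ContDiff ℝ 1 (fderiv ℝ φ) := hφ.fderiv_right (by norm_num)
  have hh := contDiff_coord_mul hφ t r X i j
  have hline : HasDerivAt (fun s : ℝ => (t, X + r • (ω + s • v))) ((0, r • v) : Spc) 0 := by
    refine (hasDerivAt_const _ _).prodMk ?_
    have := ((((hasDerivAt_id (0 : ℝ)).smul_const v).const_add ω).const_smul r).const_add X
    simpa using this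
  have hline0 : ((t, X + r • ω) : Spc) = (t, X + r • (ω + (0 : ℝ) • v)) := by simp
  have hDl : HasDerivAt (fun s : ℝ => fderiv ℝ φ (t, X + r • (ω + s • v)))
      (fderiv ℝ (fderiv ℝ φ) (t, X + r • ω) (0, r • v)) 0 := by
    have h0 : HasFDerivAt (fderiv ℝ φ) (fderiv ℝ (fderiv ℝ φ) (t, X + r • ω))
        (t, X + r • (ω + (0 : ℝ) • v)) := by
      rw [← hline0]
      exact ((hD.differentiable (by norm_num)) _).hasFDerivAt
    exact h0.comp_hasDerivAt 0 hline
  have hDl' := hDl.clm_apply (hasDerivAt_const (0 : ℝ) ((0, stdVec j) : Spc))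
  have hci : HasDerivAt (fun s : ℝ => (ω + s • v) i) (v i) 0 := by
    have := ((hasDerivAt_id (0 : ℝ)).mul_const (v i)).const_add (ω i)
    simpa using this
  have hprod := hci.mul hDl'
  have hL := (hh.differentiable (by norm_num) ω).hasFDerivAt.hasLineDerivAt v
  have huniq := HasDerivAt.unique hL hprod
  rw [huniq]
  have hsm : ((0, r • v) : Spc) = r • ((0, v) : Spc) := by simp
  simp only [hsm, map_smul]
  simp
  ring

/-- The algebraic identity behind `Δ_S = ∑_{i<j} (ωᵢ∂ⱼ - ωⱼ∂ᵢ)²`, with `A` and `B` in the place of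
the first and second derivatives. -/
lemma angular_identity (A : Spc →L[ℝ] ℝ) (B : Spc →L[ℝ] Spc →L[ℝ] ℝ) (r : ℝ) (ω : E3)
    (hω : ‖ω‖ = 1) :
    -(2 * A (0, ω) + r * (B (0, ω) (0, ω) - ∑ i : Fin 3, B (0, stdVec i) (0, stdVec i)))
      = ∑ i : Fin 3, ∑ j : Fin 3,
        (ω i * (r * B (0, ω i • stdVec j - ω j • stdVec i) (0, stdVec j))
          + (ω i • stdVec j - ω j • stdVec i) i * A (0, stdVec j)) := by
  have hsq : ω 0 ^ 2 + ω 1 ^ 2 + ω 2 ^ 2 = 1 := by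
    have := EuclideanSpace.norm_sq_eq ω
    rw [hω] at this
    simpa [Fin.sum_univ_three] using this.symm
  have hω3 : ((0, ω) : Spc) = ω 0 • ((0, stdVec 0) : Spc) + ω 1 • ((0, stdVec 1) : Spc)
      + ω 2 • ((0, stdVec 2) : Spc) := by
    conv_lhs => rw [sum_smul_stdVec ω, Fin.sum_univ_three]
    simp
  have hv : ∀ i j : Fin 3, ((0, ω i • stdVec j - ω j • stdVec i) : Spc)
      = ω i • ((0, stdVec j) : Spc) - ω j • ((0, stdVec i) : Spc) := fun i j => by simp
  simp only [hω3, hv, Fin.sum_univ_three, map_add, map_sub, map_smul, _root_.add_apply,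
    _root_.sub_apply, _root_.smul_apply, smul_eq_mul, PiLp.sub_apply,
    PiLp.smul_apply]
  simp
  linear_combination (-r * (B (0, stdVec 0) (0, stdVec 0) + B (0, stdVec 1) (0, stdVec 1)
    + B (0, stdVec 2) (0, stdVec 2))) * hsq

/-- The angular part of the Laplacian has zero mean over the sphere of radius `r` about `X`. The
integrand is `r ∂ᵣ²u + 2 ∂ᵣu - r Δu` for `u = φ(t, ·)`, that is, for `r ≠ 0`,
`-r⁻¹` times the Laplacian of the unit sphere applied to `ω ↦ u(X + rω)`. For `|ω| = 1` it
equals `-∑ᵢⱼ (ωᵢ∂ⱼ - ωⱼ∂ᵢ)(ωᵢ (∂ⱼu)(X + rω))`, a sum of derivatives along rotations. -/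
lemma integral_angular_eq_zero {φ : Spc → ℝ} (hφ : ContDiff ℝ 2 φ) (t r : ℝ) (X : E3) :
    ∫ ω, (2 * fderiv ℝ φ (t, X + r • ω) (0, ω)
      + r * (fderiv ℝ (fderiv ℝ φ) (t, X + r • ω) (0, ω) (0, ω)
        - ∑ i : Fin 3, fderiv ℝ (fderiv ℝ φ) (t, X + r • ω) (0, stdVec i) (0, stdVec i)))
      ∂sphereMeasure = 0 := by
  have hh := contDiff_coord_mul hφ t r X
  have hder : ∀ (i j : Fin 3) (ω v : E3),
      fderiv ℝ (fun ω : E3 => ω i * fderiv ℝ φ (t, X + r • ω) (0, stdVec j)) ω v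
        = ω i * (r * fderiv ℝ (fderiv ℝ φ) (t, X + r • ω) (0, v) (0, stdVec j))
          + v i * fderiv ℝ φ (t, X + r • ω) (0, stdVec j) :=
    fun i j ω v => fderiv_coord_mul hφ t r X i j ω v
  have hzero : ∑ i : Fin 3, ∑ j : Fin 3,
      ∫ ω, fderiv ℝ (fun ω : E3 => ω i * fderiv ℝ φ (t, X + r • ω) (0, stdVec j)) ω
        (ω i • stdVec j - ω j • stdVec i) ∂sphereMeasure = 0 :=
    Finset.sum_eq_zero fun i _ => Finset.sum_eq_zero fun j _ => integral_rot_eq_zero i j _ (hh i j)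
  have hint : ∀ i j : Fin 3, Integrable (fun ω =>
      fderiv ℝ (fun ω : E3 => ω i * fderiv ℝ φ (t, X + r • ω) (0, stdVec j)) ω
        (ω i • stdVec j - ω j • stdVec i)) sphereMeasure := fun i j => by
    have := (hh i j).continuous_fderiv (by norm_num)
    exact integrable_sphere (this.clm_apply (by fun_prop))
  simp_rw [← integral_finsetSum _ (fun j _ => hint _ j)] at hzero
  rw [← integral_finsetSum _ (fun i _ => integrable_finsetSum _ fun j _ => hint i j)] at hzero
  rw [← neg_eq_zero, ← integral_neg]
  refine (integral_congr_ae ?_).trans hzero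
  filter_upwards [ae_norm_eq_one] with ω hω
  simp only [hder]
  exact angular_identity _ _ r ω hω

/-! ### Propagation along the backward light cone -/

/-- Kirchhoff's formula in the case needed: a solution with zero Cauchy data whose forcing
vanishes on the backward light cone of `(T, X)` vanishes at `(T, X)`. -/
lemma eq_zero_of_cone {T : ℝ} (hT : 0 < T) {X : E3} {φ : Spc → ℝ} (hφ : ContDiff ℝ 2 φ)
    (h0 : ∀ x : E3, φ (0, x) = 0) (h1 : ∀ x : E3, dt φ (0, x) = 0)
    (hF : ∀ r ∈ Icc 0 T, ∀ ω : E3, ‖ω‖ = 1 → dalembert φ (T - r, X + r • ω) = 0) :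
    φ (T, X) = 0 := by
  have hD : ContDiff ℝ 1 (fderiv ℝ φ) := hφ.fderiv_right (by norm_num)
  have hc0 := hφ.continuous
  have hc1 := hD.continuous
  have hc2 : Continuous (fderiv ℝ (fderiv ℝ φ)) := hD.continuous_fderiv (by norm_num)
  have key := hasDerivAt_integral_sphere
    (fun r ω => r * fderiv ℝ φ (T - r, X + r • ω) (1, ω) + φ (T - r, X + r • ω))
    (fun r ω => (fderiv ℝ φ (T - r, X + r • ω) (1, ω)
        + r * fderiv ℝ (fderiv ℝ φ) (T - r, X + r • ω) (-1, ω) (1, ω))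
      + fderiv ℝ φ (T - r, X + r • ω) (-1, ω))
    (by simp only [Function.uncurry_def]; fun_prop)
    (by simp only [Function.uncurry_def]; fun_prop)
    (by
      intro r ω
      have hline : HasDerivAt (fun r : ℝ => (T - r, X + r • ω)) ((-1, ω) : Spc) r := by
        refine ((hasDerivAt_id r).const_sub T).prodMk ?_
        simpa using ((hasDerivAt_id r).smul_const ω).const_add X
      have e0 := ((hφ.differentiable (by norm_num)) (T - r, X + r • ω)).hasFDerivAt.comp_hasDerivAt
        r hline
      have e1 := ((hD.differentiable (by norm_num)) (T - r, X + r • ω)).hasFDerivAt.comp_hasDerivAt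
        r hline
      have e2 := (hasDerivAt_id r).mul (e1.clm_apply (hasDerivAt_const r ((1, ω) : Spc)))
      have e3 := e2.add e0
      simp only [id_eq, map_zero, add_zero, one_mul] at e3
      exact e3)
  have hconst := constant_of_has_deriv_right_zero (a := 0) (b := T)
    (fun r _ => (key r).continuousAt.continuousWithinAt) (fun r hr => by
      have hr' : r ∈ Icc 0 T := Ico_subset_Icc_self hr
      have hz : ∫ ω, ((fderiv ℝ φ (T - r, X + r • ω) (1, ω)
          + r * fderiv ℝ (fderiv ℝ φ) (T - r, X + r • ω) (-1, ω) (1, ω))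
          + fderiv ℝ φ (T - r, X + r • ω) (-1, ω)) ∂sphereMeasure = 0 := by
        rw [← integral_angular_eq_zero hφ (T - r) r X]
        refine integral_congr_ae ?_
        filter_upwards [ae_norm_eq_one] with ω hω
        have hw := hF r hr' ω hω
        rw [dalembert_eq hφ] at hw
        have hsymm := (hφ.contDiffAt (x := (T - r, X + r • ω))).isSymmSndFDerivAt (by simp)
          (1, 0) (0, ω)
        have ep : ((1, ω) : Spc) = (1, 0) + (0, ω) := by simp
        have em : ((-1, ω) : Spc) = -(1, 0) + (0, ω) := by simp
        rw [ep, em]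
        simp only [map_add, map_neg, _root_.add_apply, _root_.neg_apply]
        -- The mixed second derivatives cancel by symmetry, and the pure ones combine to `□φ = 0`.
        linear_combination r * hw - r * hsymm
      rw [← hz]
      exact (key r).hasDerivWithinAt) T (right_mem_Icc.mpr hT.le)
  -- At `r = T` the integrand only involves the Cauchy data, whose spatial derivatives also vanish.
  have hdata : ∀ ω : E3, fderiv ℝ φ (0, X + T • ω) (1, ω) = 0 := by
    intro ω
    have ep : ((1, ω) : Spc) = (1, 0) + (0, ω) := by simp
    have hx : fderiv ℝ φ (0, X + T • ω) (0, ω) = 0 := by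
      have hL := ((hφ.differentiable (by norm_num)) (0, X + T • ω)).hasFDerivAt.hasLineDerivAt
        ((0, ω) : Spc)
      have hL' : HasDerivAt (fun s : ℝ => φ ((0, X + T • ω) + s • ((0, ω) : Spc))) 0 0 := by
        simpa [h0] using hasDerivAt_const (0 : ℝ) (0 : ℝ)
      exact HasDerivAt.unique hL hL'
    have ht : fderiv ℝ φ (0, X + T • ω) (1, 0) = 0 := h1 _
    rw [ep, map_add, hx, ht, add_zero]
  simp [hdata, h0] at hconst
  exact hconst.resolve_left sphereMeasure_univ_pos.ne'

end Proof

/-- Strong Huygens principle: the forward solution of `□φ = F` with zero Cauchy data at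
`t = 0` and forcing supported in `{t ≥ 0}`, evaluated at `(T, X)`, depends only on the
restriction of `F` to `D_{T,X} = {T - |X| ≤ t + |x| ≤ T + |X|, t - |x| ≤ T - |X|}`. -/
theorem strong_huygens (T : ℝ) (hT : 0 < T) (X : E3)
    (φ₁ φ₂ F₁ F₂ : Spc → ℝ)
    (hφ₁ : ContDiff ℝ (⊤ : ℕ∞) φ₁) (hφ₂ : ContDiff ℝ (⊤ : ℕ∞) φ₂)
    (hF₁ : ContDiff ℝ (⊤ : ℕ∞) F₁) (hF₂ : ContDiff ℝ (⊤ : ℕ∞) F₂)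
    (heq₁ : ∀ p : Spc, dalembert φ₁ p = F₁ p)
    (heq₂ : ∀ p : Spc, dalembert φ₂ p = F₂ p)
    (hid₁ : ∀ x : E3, φ₁ (0, x) = 0) (hid₁' : ∀ x : E3, dt φ₁ (0, x) = 0)
    (hid₂ : ∀ x : E3, φ₂ (0, x) = 0) (hid₂' : ∀ x : E3, dt φ₂ (0, x) = 0)
    (hsupp₁ : ∀ (t : ℝ) (x : E3), t < 0 → F₁ (t, x) = 0)
    (hsupp₂ : ∀ (t : ℝ) (x : E3), t < 0 → F₂ (t, x) = 0)
    (hFeq : ∀ p : Spc,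
      T - ‖X‖ ≤ p.1 + ‖p.2‖ → p.1 + ‖p.2‖ ≤ T + ‖X‖ → p.1 - ‖p.2‖ ≤ T - ‖X‖ →
      F₁ p = F₂ p) :
    φ₁ (T, X) = φ₂ (T, X) := by
  have h₁ : ContDiff ℝ 2 φ₁ := hφ₁.of_le (by norm_cast)
  have h₂ : ContDiff ℝ 2 φ₂ := hφ₂.of_le (by norm_cast)
  refine sub_eq_zero.mp (eq_zero_of_cone (φ := fun q => φ₁ q - φ₂ q) hT (h₁.sub h₂) ?_ ?_ ?_)
  · intro x
    simp [hid₁, hid₂]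
  · intro x
    have e₁ : fderiv ℝ φ₁ (0, x) (1, 0) = 0 := hid₁' x
    have e₂ : fderiv ℝ φ₂ (0, x) (1, 0) = 0 := hid₂' x
    simp only [dt]
    rw [fderiv_fun_sub (h₁.differentiable (by norm_num)).differentiableAt
      (h₂.differentiable (by norm_num)).differentiableAt, _root_.sub_apply, e₁, e₂,
      sub_zero]
  · intro r hr ω hω
    -- By the triangle inequality the backward light cone of `(T, X)` lies in `D_{T,X}`.
    have hnorm : ‖r • ω‖ = r := by rw [norm_smul, hω, mul_one, Real.norm_of_nonneg hr.1]
    have t₁ := norm_add_le X (r • ω)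
    have t₂ := norm_sub_le (X + r • ω) (r • ω)
    have t₃ := norm_sub_le (X + r • ω) X
    rw [add_sub_cancel_right] at t₂
    rw [add_sub_cancel_left] at t₃
    rw [dalembert_sub h₁ h₂, heq₁, heq₂, sub_eq_zero]
    exact hFeq _ (by simp only; linarith) (by simp only; linarith) (by simp only; linarith)
end
end
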